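/- The rational solutions of y² + y = x³ + x² + x are exactly the two pairs (0, 0) and (0, −1); that is, for all x, y ∈ ℚ, y² + y = x³ + x² + x holds if and only if (x, y) = (0, 0) or (x, y) = (0, −1). In particular, this elliptic curve has only finitely many rational points (rank 0). -/

import Mathlib

/-- The Eisenstein integers `ℤ[ω]` with `ω² = -1 - ω`. -/
abbrev Eis := QuadraticAlgebra ℤ (-1) (-1)

namespace Eis

lemma norm_eq (z : Eis) : z.norm = z.re ^ 2 - z.re * z.im + z.im ^ 2 := by
  rw [QuadraticAlgebra.norm_def]; ring

lemma norm_nonneg (z : Eis) : 0 ≤ z.norm := by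
  rw [norm_eq]; nlinarith [sq_nonneg (z.re - z.im), sq_nonneg (z.re + z.im)]

lemma norm_pos {z : Eis} (hz : z ≠ 0) : 0 < z.norm := by
  rcases (norm_nonneg z).lt_or_eq with h | h
  · exact h
  · exfalso
    apply hz
    rw [norm_eq] at h
    have h1 : z.im = 0 := by
      have : z.im ^ 2 ≤ 0 := by nlinarith [sq_nonneg (2 * z.re - z.im)]
      exact pow_eq_zero_iff (two_ne_zero) |>.1 (le_antisymm this (sq_nonneg _))
    have h2 : z.re = 0 := by
      have : z.re ^ 2 ≤ 0 := by nlinarith [sq_nonneg (2 * z.im - z.re)]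
      exact pow_eq_zero_iff (two_ne_zero) |>.1 (le_antisymm this (sq_nonneg _))
    exact QuadraticAlgebra.ext h2 h1

lemma exists_round (k t : ℤ) (hk : 0 < k) : ∃ q : ℤ, -k ≤ 2 * (t - k * q) ∧ 2 * (t - k * q) ≤ k := by
  have h1 := Int.emod_nonneg t hk.ne'
  have h2 := Int.emod_lt_of_pos t hk
  have h3 := Int.emod_add_mul_ediv t k
  by_cases h : 2 * (t % k) ≤ k
  · exact ⟨t / k, by linarith, by linarith⟩
  · exact ⟨t / k + 1, by linarith, by linarith⟩

lemma exists_quot (x y : Eis) (hy : y ≠ 0) : ∃ q : Eis, (x - y * q).norm < y.norm := by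
  have hN := norm_pos hy
  obtain ⟨q1, h1, h1'⟩ := exists_round y.norm (x * star y).re hN
  obtain ⟨q2, h2, h2'⟩ := exists_round y.norm (x * star y).im hN
  refine ⟨⟨q1, q2⟩, ?_⟩
  have e : (x - y * ⟨q1, q2⟩) * star y =
      ⟨(x * star y).re - y.norm * q1, (x * star y).im - y.norm * q2⟩ := by
    ext
    · simp [norm_eq]; ring
    · simp [norm_eq]; ring
  have e3 := norm_eq ⟨(x * star y).re - y.norm * q1, (x * star y).im - y.norm * q2⟩
  simp only at e3
  have e2 := congrArg QuadraticAlgebra.norm e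
  rw [map_mul, QuadraticAlgebra.norm_star, e3] at e2
  set N := y.norm
  set s := (x * star y).re - N * q1
  set t := (x * star y).im - N * q2
  have : (x - y * ⟨q1, q2⟩).norm * N < N * N := by
    rw [e2]
    have a1 : 4 * s ^ 2 ≤ N ^ 2 := by nlinarith
    have a2 : 4 * t ^ 2 ≤ N ^ 2 := by nlinarith
    nlinarith [sq_nonneg (s + t)]
  exact lt_of_mul_lt_mul_right this hN.le

open Classical in
/-- Euclidean quotient by choice. -/
noncomputable def quo (x y : Eis) : Eis := if hy : y = 0 then 0 else (exists_quot x y hy).choose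

/-- The Euclidean structure. -/
@[reducible] noncomputable def eucl : EuclideanDomain Eis :=
  { (inferInstance : CommRing Eis), (inferInstance : Nontrivial Eis) with
    quotient := quo
    remainder := fun x y => x - y * quo x y
    quotient_zero := fun x => by simp [quo]
    quotient_mul_add_remainder_eq := fun x y => by ring
    r := fun x y => x.norm.natAbs < y.norm.natAbs
    r_wellFounded := (measure (fun z : Eis => z.norm.natAbs)).wf
    remainder_lt := fun x y hy => by
      have h := (exists_quot x y hy).choose_spec
      have h0 := norm_nonneg (x - y * (exists_quot x y hy).choose)
      simp only [quo, hy, dite_false]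
      omega
    mul_left_not_lt := fun a b hb => by
      rw [map_mul, Int.natAbs_mul, not_lt]
      have := norm_pos hb
      exact Nat.le_mul_of_pos_right _ (by omega) }

instance : IsDomain Eis := @EuclideanDomain.instIsDomain Eis eucl

instance : IsPrincipalIdealRing Eis := @EuclideanDomain.to_principal_ideal_domain Eis eucl

end Eis

/-- A coprime representation of a cube by `m² - mn + n²` comes from a cube in `ℤ[ω]`. -/
lemma cube_rep (m n d : ℤ) (hmn : IsCoprime m n) (h3 : ¬ (3 : ℤ) ∣ m) (hn : (3 : ℤ) ∣ n)
    (h : m ^ 2 - m * n + n ^ 2 = d ^ 3) :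
    ∃ a b : ℤ, m = a ^ 3 + b ^ 3 - 3 * a * b ^ 2 ∧ n = 3 * (a * b * (a - b)) ∧
      d = a ^ 2 - a * b + b ^ 2 := by
  have hcop : IsCoprime (⟨m, n⟩ : Eis) (star ⟨m, n⟩) := by
    obtain ⟨u, v, huv⟩ := hmn
    have h3d : IsCoprime (3 : ℤ) (d ^ 3) := by
      rw [Prime.coprime_iff_not_dvd Int.prime_three, ← h]
      intro hd
      apply h3
      have : (3 : ℤ) ∣ m ^ 2 := by
        have e : m ^ 2 = (m ^ 2 - m * n + n ^ 2) + n * (m - n) := by ring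
        rw [e]; exact dvd_add hd (hn.mul_right _)
      exact Int.prime_three.dvd_of_dvd_pow this
    obtain ⟨r, s, hrs⟩ := h3d
    rw [← h] at hrs
    refine ⟨⟨r * (u - v), 0⟩ - ⟨r * (u + 2 * v), 0⟩ * ⟨0, 1⟩ + ⟨s, 0⟩ * star ⟨m, n⟩,
      ⟨r * (u - v), 0⟩ - ⟨r * (u + 2 * v), 0⟩ * ⟨-1, -1⟩, ?_⟩
    change _ = (⟨1, 0⟩ : Eis)
    ext
    · simp
      linear_combination hrs + 3 * r * huv
    · simp
      ring
  have hprod : (⟨m, n⟩ : Eis) * star ⟨m, n⟩ = (⟨d, 0⟩ : Eis) ^ 3 := by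
    ext
    · simp [pow_succ]; linear_combination h
    · simp [pow_succ]; ring
  obtain ⟨⟨a, b⟩, w, hw⟩ := exists_associated_pow_of_mul_eq_pow' hcop hprod
  have hwn : (w : Eis).norm = 1 := by
    have h1 := (QuadraticAlgebra.isUnit_iff_norm_isUnit).1 w.isUnit
    rcases Int.isUnit_iff.1 h1 with h | h
    · exact h
    · have := Eis.norm_nonneg (w : Eis); omega
  have hnorm : d = a ^ 2 - a * b + b ^ 2 := by
    have h1 := congrArg QuadraticAlgebra.norm hw
    rw [map_mul, hwn, map_pow, Eis.norm_eq, Eis.norm_eq] at h1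
    simp only at h1
    rw [h, mul_one] at h1
    exact ((Odd.strictMono_pow (by decide : Odd 3)).injective h1).symm
  rcases hwv : (w : Eis) with ⟨p, q⟩
  rw [hwv] at hw hwn
  have hre := congrArg QuadraticAlgebra.re hw
  have him := congrArg QuadraticAlgebra.im hw
  simp [pow_succ] at hre him
  rw [Eis.norm_eq] at hwn
  simp only at hwn
  have hp : -1 ≤ p ∧ p ≤ 1 := by constructor <;> nlinarith [sq_nonneg (2 * q - p)]
  have hq : -1 ≤ q ∧ q ≤ 1 := by constructor <;> nlinarith [sq_nonneg (2 * p - q)]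
  -- coordinates of the cube
  have hre' : m = p * (a ^ 3 + b ^ 3 - 3 * a * b ^ 2) - q * (3 * (a * b * (a - b))) := by
    rw [← hre]; ring
  have him' : n = q * (a ^ 3 + b ^ 3 - 3 * a * b ^ 2) + (p - q) * (3 * (a * b * (a - b))) := by
    rw [← him]; ring
  have hq0 : q = 0 := by
    by_contra hq0
    have hdv : (3 : ℤ) ∣ a ^ 3 + b ^ 3 - 3 * a * b ^ 2 := by
      have h1 : (3 : ℤ) ∣ q * (a ^ 3 + b ^ 3 - 3 * a * b ^ 2) := by
        have : q * (a ^ 3 + b ^ 3 - 3 * a * b ^ 2) = n - 3 * ((p - q) * (a * b * (a - b))) := by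
          rw [him']; ring
        rw [this]; exact dvd_sub hn (dvd_mul_right _ _)
      rcases Int.prime_three.dvd_or_dvd h1 with h | h
      · omega
      · exact h
    apply h3
    rw [hre']
    exact dvd_sub (hdv.mul_left _) ((dvd_mul_right _ _).mul_left _)
  subst hq0
  have hp1 : p = 1 ∨ p = -1 := by
    have : p ≠ 0 := by rintro rfl; norm_num at hwn
    omega
  rcases hp1 with rfl | rfl
  · exact ⟨a, b, by rw [hre']; ring, by rw [him']; ring, hnorm⟩
  · exact ⟨-a, -b, by rw [hre']; ring, by rw [him']; ring, by rw [hnorm]; ring⟩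

lemma cop_of_prime {a b : ℤ} (h : ∀ p : ℤ, Prime p → p ∣ a → p ∣ b → False) : IsCoprime a b := by
  apply isCoprime_of_prime_dvd
  · rintro ⟨rfl, rfl⟩
    exact h 2 Int.prime_two (dvd_zero _) (dvd_zero _)
  · intro z hz h1 h2
    exact h z hz h1 h2

lemma cop_prime_false {a b p : ℤ} (h : IsCoprime a b) (hp : Prime p) (h1 : p ∣ a) (h2 : p ∣ b) :
    False := hp.not_isUnit (h.isUnit_of_dvd' h1 h2)

lemma cube_inj {a b : ℤ} (h : a ^ 3 = b ^ 3) : a = b :=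
  (Odd.strictMono_pow (by decide : Odd 3)).injective h

lemma prime_dvd_three {p : ℤ} (hp : Prime p) (h : p ∣ 3) : (3 : ℤ) ∣ p := by
  exact ((hp.associated_of_dvd Int.prime_three h).symm).dvd

/-- From a primitive point of `uvw = -c³`, `u+v+w = -2c` to the cubic `X³+Y³+Z³ = 2XYZ`. -/
lemma stepA (u v w c : ℤ) (h : u * v * w = -c ^ 3) (hs : u + v + w = -2 * c)
    (hg : ∀ p : ℤ, Prime p → p ∣ u → p ∣ v → p ∣ c → False) :
    ∃ X Y Z : ℤ, IsCoprime X Y ∧ IsCoprime X Z ∧ IsCoprime Y Z ∧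
      X ^ 3 + Y ^ 3 + Z ^ 3 = 2 * X * Y * Z ∧ X * Y * Z = -c := by
  have hc : ∀ p : ℤ, Prime p → p ∣ u * v * w → p ∣ c := fun p hp hd => by
    rw [h, dvd_neg] at hd
    exact hp.dvd_of_dvd_pow hd
  have huv : IsCoprime u v := cop_of_prime fun p hp h1 h2 =>
    hg p hp h1 h2 (hc p hp ((h1.mul_right _).mul_right _))
  have huw : IsCoprime u w := cop_of_prime fun p hp h1 h2 => by
    have hpc := hc p hp (h2.mul_left _)
    refine hg p hp h1 ?_ hpc
    have : v = -2 * c - u - w := by linarith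
    rw [this]
    exact dvd_sub (dvd_sub (hpc.mul_left _) h1) h2
  have hvw : IsCoprime v w := cop_of_prime fun p hp h1 h2 => by
    have hpc := hc p hp (h2.mul_left _)
    refine hg p hp ?_ h1 hpc
    have : u = -2 * c - v - w := by linarith
    rw [this]
    exact dvd_sub (dvd_sub (hpc.mul_left _) h1) h2
  have o3 : Odd 3 := by decide
  obtain ⟨X, hX⟩ := Int.eq_pow_of_mul_eq_pow_odd_left (a := u) (b := v * w) (c := -c)
    (huv.mul_right huw) o3 (by rw [← mul_assoc, h]; ring)
  obtain ⟨Y, hY⟩ := Int.eq_pow_of_mul_eq_pow_odd_left (a := v) (b := u * w) (c := -c)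
    (huv.symm.mul_right hvw) o3 (by linear_combination h)
  obtain ⟨Z, hZ⟩ := Int.eq_pow_of_mul_eq_pow_odd_left (a := w) (b := u * v) (c := -c)
    (huw.symm.mul_right hvw.symm) o3 (by linear_combination h)
  have e : X * Y * Z = -c := by
    apply cube_inj
    rw [mul_pow, mul_pow, ← hX, ← hY, ← hZ, h]; ring
  subst hX hY hZ
  refine ⟨X, Y, Z, ?_, ?_, ?_, by linear_combination hs - 2 * e, e⟩
  · exact (IsCoprime.pow_iff (by norm_num) (by norm_num)).1 huv
  · exact (IsCoprime.pow_iff (by norm_num) (by norm_num)).1 huw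
  · exact (IsCoprime.pow_iff (by norm_num) (by norm_num)).1 hvw

/-- The second descent when `3 ∤ X`. -/
lemma stepB1 (X Y Z : ℤ) (hXY : IsCoprime X Y) (hXZ : IsCoprime X Z) (hYZ : IsCoprime Y Z)
    (h : X ^ 3 + Y ^ 3 + Z ^ 3 = 2 * X * Y * Z) (h0 : X * Y * Z ≠ 0)
    (h19 : (19 : ℤ) ∣ 2 * X + 3 * Y + 3 * Z) (h3 : ¬ (3 : ℤ) ∣ X) :
    ∃ u v w c : ℤ, c ≠ 0 ∧ u * v * w = -c ^ 3 ∧ u + v + w = -2 * c ∧ |c| < |X * Y * Z| := by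
  obtain ⟨l, hl⟩ := h19
  set m := 2 * X - 3 * Z with hm
  set n := 3 * (Y - Z) with hn
  have hp3 : ∀ p : ℤ, Prime p → p ∣ X → ¬ p ∣ 3 := fun p hp h1 h2 =>
    h3 ((prime_dvd_three hp h2).trans h1)
  have key : (m ^ 2 - m * n + n ^ 2) * l = (-X) ^ 3 := by
    have : 19 * ((m ^ 2 - m * n + n ^ 2) * l) = 19 * (-X) ^ 3 := by
      calc 19 * ((m ^ 2 - m * n + n ^ 2) * l) = (m ^ 2 - m * n + n ^ 2) * (19 * l) := by ring
        _ = _ := by rw [← hl, hm, hn]; linear_combination 27 * h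
    linarith
  have hpX : ∀ p : ℤ, Prime p → p ∣ m ^ 2 - m * n + n ^ 2 → p ∣ X := fun p hp hd => by
    have h1 : p ∣ (-X) ^ 3 := by rw [← key]; exact hd.mul_right _
    exact (dvd_neg).1 (hp.dvd_of_dvd_pow h1)
  have hcop : IsCoprime m n := cop_of_prime fun p hp h1 h2 => by
    have hX : p ∣ X := hpX p hp (by
      have : m ^ 2 - m * n + n ^ 2 = m * (m - n) + n * n := by ring
      rw [this]; exact dvd_add (h1.mul_right _) (h2.mul_right _))
    have h4 : p ∣ 3 * Z := by
      have : 3 * Z = 2 * X - m := by rw [hm]; ring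
      rw [this]; exact dvd_sub (hX.mul_left _) h1
    rcases hp.dvd_or_dvd h4 with h5 | h5
    · exact hp3 p hp hX h5
    · exact cop_prime_false hXZ hp hX h5
  have hcopNl : IsCoprime (m ^ 2 - m * n + n ^ 2) l := cop_of_prime fun p hp h1 h2 => by
    have hX := hpX p hp h1
    have hd : p ∣ 3 * (Y + Z) := by
      have : 3 * (Y + Z) = 19 * l - 2 * X := by linarith
      rw [this]; exact dvd_sub (h2.mul_left _) (hX.mul_left _)
    have hYZ' : p ∣ Y + Z := (hp.dvd_or_dvd hd).resolve_left (hp3 p hp hX)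
    have h27 : p ∣ 3 ^ 3 * Z ^ 2 := by
      have : 3 ^ 3 * Z ^ 2 = (m ^ 2 - m * n + n ^ 2) - X * (4 * X - 6 * Y - 6 * Z)
          - (Y + Z) * (9 * (Y - 2 * Z)) := by
        rw [hm, hn]; ring
      rw [this]
      exact dvd_sub (dvd_sub h1 (hX.mul_right _)) (hYZ'.mul_right _)
    rcases hp.dvd_or_dvd h27 with h5 | h5
    · exact hp3 p hp hX (hp.dvd_of_dvd_pow h5)
    · exact cop_prime_false hXZ hp hX (hp.dvd_of_dvd_pow h5)
  obtain ⟨⟨d, hd⟩, ⟨c, hc⟩⟩ := Int.eq_pow_of_mul_eq_pow_odd hcopNl (by decide) key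
  have hdc : d * c = -X := by
    apply cube_inj
    rw [mul_pow, ← hd, ← hc, key]
  have hm3 : ¬ (3 : ℤ) ∣ m := by rw [hm]; omega
  obtain ⟨a, b, e1, e2, e3⟩ := cube_rep m n d hcop hm3 (dvd_mul_right _ _) hd
  have hX0 : X ≠ 0 := by rintro rfl; simp at h0
  have hd0 : d ≠ 0 := by rintro rfl; apply hX0; linarith
  have hc0 : c ≠ 0 := by rintro rfl; apply hX0; linarith
  -- the cubic in `a, b, c`
  have hcub : -6 * c * (a ^ 2 - a * b + b ^ 2) =
      19 * c ^ 3 + (2 * a ^ 3 - 3 * a ^ 2 * b - 3 * a * b ^ 2 + 2 * b ^ 3) := by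
    rw [← hc, ← hl, ← e3]
    linear_combination (-6) * hdc + 2 * e1 - e2 - 2 * hm + hn
  have hdv : (3 : ℤ) ∣ a + b + 2 * c := by
    have : (3 : ℤ) ∣ (a + b + 2 * c) ^ 3 :=
      ⟨a ^ 3 + b ^ 3 + 9 * c ^ 3 + 2 * c * (a ^ 2 - a * b + b ^ 2) - a ^ 2 * b - a * b ^ 2
        + (a + b) * (b + 2 * c) * (a + 2 * c), by linear_combination hcub⟩
    exact Int.prime_three.dvd_of_dvd_pow this
  obtain ⟨k, hk⟩ := hdv
  refine ⟨-k, a - k, b - k, c, hc0, ?_, by linarith, ?_⟩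
  · have hb : b = 3 * k - a - 2 * c := by linarith
    have : 27 * (-k * (a - k) * (b - k)) = 27 * (-c ^ 3) := by
      subst hb
      linear_combination (-1) * hcub
    linarith
  · have hd1 : 1 ≤ |d| := Int.one_le_abs hd0
    have hX' : |c| ≤ |X| := by
      rw [← abs_neg X, ← hdc, abs_mul]
      nlinarith [abs_nonneg c]
    have hYZ1 : 1 < |Y * Z| := by
      have hYZ0 : Y * Z ≠ 0 := by
        intro h; apply h0; rw [mul_assoc, h, mul_zero]
      rcases (Int.one_le_abs hYZ0).lt_or_eq with h1 | h1
      · exact h1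
      exfalso
      have hu : IsUnit (Y * Z) := Int.isUnit_iff_abs_eq.2 h1.symm
      have hY := Int.isUnit_iff.1 (isUnit_of_mul_isUnit_left hu)
      have hZ := Int.isUnit_iff.1 (isUnit_of_mul_isUnit_right hu)
      have hXle : X ≤ 2 := by
        rcases hY with rfl | rfl <;> rcases hZ with rfl | rfl <;> by_contra hlt <;> push Not at hlt <;> nlinarith [mul_pos (by linarith : (0:ℤ) < X) (by linarith : (0:ℤ) < X)]
      have hXge : -2 ≤ X := by
        rcases hY with rfl | rfl <;> rcases hZ with rfl | rfl <;> by_contra hlt <;> push Not at hlt <;> nlinarith [mul_pos (by linarith : (0:ℤ) < -X) (by linarith : (0:ℤ) < -X)]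
      rcases hY with rfl | rfl <;> rcases hZ with rfl | rfl <;> interval_cases X <;> first | (norm_num at h; done) | (norm_num at h0; done)
    rw [mul_assoc, abs_mul]
    have : 0 < |X| := abs_pos.2 hX0
    nlinarith

/-- The second descent when `3 ∣ X`. -/
lemma stepB2 (X Y Z : ℤ) (hXZ : IsCoprime X Z) (hXY : IsCoprime X Y)
    (h : X ^ 3 + Y ^ 3 + Z ^ 3 = 2 * X * Y * Z) (h0 : X * Y * Z ≠ 0)
    (h19 : (19 : ℤ) ∣ 2 * X + 3 * Y + 3 * Z) (h3 : (3 : ℤ) ∣ X) :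
    ∃ u v w c : ℤ, c ≠ 0 ∧ u * v * w = -c ^ 3 ∧ u + v + w = -2 * c ∧ |c| < |X * Y * Z| := by
  have hZ3 : ¬ (3 : ℤ) ∣ Z := fun hz => cop_prime_false hXZ Int.prime_three h3 hz
  have hY3 : ¬ (3 : ℤ) ∣ Y := fun hz => cop_prime_false hXY Int.prime_three h3 hz
  have hYZ3 : ¬ (3 : ℤ) ∣ Y * Z := fun hd => (Int.prime_three.dvd_or_dvd hd).elim hY3 hZ3
  obtain ⟨x1, rfl⟩ := h3
  have hs : (3 : ℤ) ∣ Y + Z := by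
    have : (3 : ℤ) ∣ (Y + Z) ^ 3 :=
      ⟨2 * x1 * Y * Z - 9 * x1 ^ 3 + Y ^ 2 * Z + Y * Z ^ 2, by linear_combination h⟩
    exact Int.prime_three.dvd_of_dvd_pow this
  obtain ⟨m, hm⟩ := hs
  have hY : Y = 3 * m - Z := by linarith
  have hx1 : (3 : ℤ) ∣ x1 := by
    have : (3 : ℤ) ∣ x1 * (2 * (Y * Z)) := by
      refine ⟨3 * x1 ^ 3 + m * (3 * m ^ 2 - Y * Z), ?_⟩
      have : 3 * (x1 * (2 * (Y * Z))) = 3 * (3 * (3 * x1 ^ 3 + m * (3 * m ^ 2 - Y * Z))) := by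
        subst hY; linear_combination (-1) * h
      linarith
    rcases Int.prime_three.dvd_or_dvd this with h1 | h1
    · exact h1
    · omega
  obtain ⟨x, rfl⟩ := hx1
  have hxm : (3 : ℤ) ∣ m - x := by
    have : (3 : ℤ) ∣ (m - x) * (Y * Z) := by
      refine ⟨27 * x ^ 3 + m ^ 3 - x * (Y * Z), ?_⟩
      have : 9 * ((m - x) * (Y * Z)) = 9 * (3 * (27 * x ^ 3 + m ^ 3 - x * (Y * Z))) := by
        subst hY; linear_combination (-1) * h
      linarith
    exact (Int.prime_three.dvd_or_dvd this).resolve_right hYZ3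
  obtain ⟨n, hn⟩ := hxm
  have hm' : m = 3 * n + x := by linarith
  subst hm'
  subst hY
  obtain ⟨l, hl⟩ : (19 : ℤ) ∣ x + n := by omega
  have key : ((Z - 6 * n) ^ 2 - (Z - 6 * n) * (3 * (x - n)) + (3 * (x - n)) ^ 2) * l = (-x) ^ 3 := by
    have : (27 * 19) * (((Z - 6 * n) ^ 2 - (Z - 6 * n) * (3 * (x - n)) + (3 * (x - n)) ^ 2) * l)
        = (27 * 19) * (-x) ^ 3 := by
      calc _ = 27 * ((Z - 6 * n) ^ 2 - (Z - 6 * n) * (3 * (x - n)) + (3 * (x - n)) ^ 2) * (19 * l) := by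
              ring
        _ = _ := by rw [← hl]; linear_combination h
    linarith
  set M := Z - 6 * n with hM
  set N := 3 * (x - n) with hN
  have hpx : ∀ p : ℤ, Prime p → p ∣ M ^ 2 - M * N + N ^ 2 → p ∣ x := fun p hp hd => by
    have h1 : p ∣ (-x) ^ 3 := by rw [← key]; exact hd.mul_right _
    exact (dvd_neg).1 (hp.dvd_of_dvd_pow h1)
  have hxZ : ∀ p : ℤ, Prime p → p ∣ x → p ∣ Z → False := fun p hp h1 h2 =>
    cop_prime_false hXZ hp ((h1.mul_left _).mul_left _) h2
  have hcop : IsCoprime M N := cop_of_prime fun p hp h1 h2 => by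
    have hX : p ∣ x := hpx p hp (by
      have : M ^ 2 - M * N + N ^ 2 = M * (M - N) + N * N := by ring
      rw [this]; exact dvd_add (h1.mul_right _) (h2.mul_right _))
    refine hxZ p hp hX ?_
    have : Z = M + 2 * (3 * x) - 2 * N := by rw [hM, hN]; ring
    rw [this]
    exact dvd_sub (dvd_add h1 ((hX.mul_left _).mul_left _)) (h2.mul_left _)
  have hcopNl : IsCoprime (M ^ 2 - M * N + N ^ 2) l := cop_of_prime fun p hp h1 h2 => by
    have hX := hpx p hp h1
    have hn' : p ∣ n := by
      have : n = 19 * l - x := by linarith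
      rw [this]; exact dvd_sub (h2.mul_left _) hX
    refine hxZ p hp hX (hp.dvd_of_dvd_pow (n := 2) ?_)
    have : Z ^ 2 = (M ^ 2 - M * N + N ^ 2) - n * (27 * n - 9 * Z) - x * (9 * x - 3 * Z) := by
      rw [hM, hN]; ring
    rw [this]
    exact dvd_sub (dvd_sub h1 (hn'.mul_right _)) (hX.mul_right _)
  obtain ⟨⟨d, hd⟩, ⟨c, hc⟩⟩ := Int.eq_pow_of_mul_eq_pow_odd hcopNl (by decide) key
  have hdc : d * c = -x := by
    apply cube_inj
    rw [mul_pow, ← hd, ← hc, key]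
  have hm3 : ¬ (3 : ℤ) ∣ M := by rw [hM]; omega
  obtain ⟨a, b, e1, e2, e3⟩ := cube_rep M N d hcop hm3 (dvd_mul_right _ _) hd
  have hX0 : x ≠ 0 := by rintro rfl; simp at h0
  have hd0 : d ≠ 0 := by rintro rfl; apply hX0; linarith
  have hc0 : c ≠ 0 := by rintro rfl; apply hX0; linarith
  have hcub : -2 * c * (a ^ 2 - a * b + b ^ 2) - 19 * c ^ 3 = a * b * (a - b) := by
    rw [← hc, ← e3]
    have : x - n = a * b * (a - b) := by linarith
    linear_combination this - 2 * hdc + hl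
  refine ⟨a - 2 * c, -b - 2 * c, b - a - 2 * c, 3 * c, by omega, ?_, by ring, ?_⟩
  · linear_combination (-1) * hcub
  · have hd1 : 1 ≤ |d| := Int.one_le_abs hd0
    have hc1 : 1 ≤ |c| := Int.one_le_abs hc0
    have hYZ1 : 1 ≤ |(3 * (3 * n + x) - Z) * Z| := by
      apply Int.one_le_abs
      intro h; apply h0; rw [mul_assoc, h, mul_zero]
    have hx' : |c| ≤ |x| := by
      rw [← abs_neg x, ← hdc, abs_mul]
      nlinarith [abs_nonneg c]
    have t1 : |3 * c| = 3 * |c| := by rw [abs_mul]; rfl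
    have t2 : |3 * (3 * x)| = 9 * |x| := by rw [← mul_assoc, abs_mul]; rfl
    rw [t1, mul_assoc, abs_mul, t2]
    nlinarith

lemma stepB (X Y Z : ℤ) (hXY : IsCoprime X Y) (hXZ : IsCoprime X Z) (hYZ : IsCoprime Y Z)
    (h : X ^ 3 + Y ^ 3 + Z ^ 3 = 2 * X * Y * Z) (h0 : X * Y * Z ≠ 0) :
    ∃ u v w c : ℤ, c ≠ 0 ∧ u * v * w = -c ^ 3 ∧ u + v + w = -2 * c ∧ |c| < |X * Y * Z| := by
  have aux : ∀ X Y Z : ℤ, IsCoprime X Y → IsCoprime X Z → IsCoprime Y Z →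
      X ^ 3 + Y ^ 3 + Z ^ 3 = 2 * X * Y * Z → X * Y * Z ≠ 0 →
      (19 : ℤ) ∣ 2 * X + 3 * Y + 3 * Z →
      ∃ u v w c : ℤ, c ≠ 0 ∧ u * v * w = -c ^ 3 ∧ u + v + w = -2 * c ∧ |c| < |X * Y * Z| := by
    intro X Y Z hXY hXZ hYZ h h0 h19
    by_cases h3 : (3 : ℤ) ∣ X
    · exact stepB2 X Y Z hXZ hXY h h0 h19 h3
    · exact stepB1 X Y Z hXY hXZ hYZ h h0 h19 h3
  have p19 : Prime (19 : ℤ) := Int.prime_iff_natAbs_prime.2 (by norm_num)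
  have hd : (19 : ℤ) ∣ (2 * X + 3 * Y + 3 * Z) * ((2 * Y + 3 * Z + 3 * X) *
      (2 * Z + 3 * X + 3 * Y)) := by
    refine ⟨3 * (X ^ 2 * Y + X ^ 2 * Z + Y ^ 2 * X + Y ^ 2 * Z + Z ^ 2 * X + Z ^ 2 * Y)
      + 8 * X * Y * Z, ?_⟩
    linear_combination 18 * h
  rcases p19.dvd_or_dvd hd with h1 | h1
  · exact aux X Y Z hXY hXZ hYZ h h0 h1
  rcases p19.dvd_or_dvd h1 with h2 | h2
  · have := aux Y Z X hYZ hXY.symm hXZ.symm (by linarith) (by rwa [show Y * Z * X = X * Y * Z by ring]) h2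
    rwa [show Y * Z * X = X * Y * Z by ring] at this
  · have := aux Z X Y hXZ.symm hYZ.symm hXY (by linarith) (by rwa [show Z * X * Y = X * Y * Z by ring]) h2
    rwa [show Z * X * Y = X * Y * Z by ring] at this

/-- Infinite descent. -/
lemma descent (N : ℕ) : ∀ u v w c : ℤ, c.natAbs = N → c ≠ 0 → u * v * w = -c ^ 3 →
    u + v + w = -2 * c → False := by
  induction N using Nat.strong_induction_on with
  | _ N ih =>
    intro u v w c hN hc h hs
    by_cases hg : ∀ p : ℤ, Prime p → p ∣ u → p ∣ v → p ∣ c → False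
    · obtain ⟨X, Y, Z, h1, h2, h3, h4, h5⟩ := stepA u v w c h hs hg
      obtain ⟨u', v', w', c', hc', h', hs', hlt⟩ := stepB X Y Z h1 h2 h3 h4 (by rw [h5]; omega)
      rw [h5, abs_neg] at hlt
      exact ih c'.natAbs (by rw [← hN]; exact Int.natAbs_lt_iff_sq_lt.2 (sq_lt_sq.2 hlt)) u' v' w' c' rfl hc' h' hs'
    · push Not at hg
      obtain ⟨p, hp, ⟨u', rfl⟩, ⟨v', rfl⟩, ⟨c', rfl⟩, -⟩ := hg
      have hp0 := hp.ne_zero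
      have hc' : c' ≠ 0 := by rintro rfl; simp at hc
      have hw : w = p * (-2 * c' - u' - v') := by linarith
      subst hw
      refine ih c'.natAbs ?_ u' v' (-2 * c' - u' - v') c' rfl hc' ?_ (by ring)
      · rw [← hN, Int.natAbs_mul]
        have h1 : p.natAbs ≠ 1 := fun h => hp.not_isUnit (Int.isUnit_iff_natAbs_eq.2 h)
        have h2 : 0 < p.natAbs := by omega
        have h3 : 0 < c'.natAbs := by omega
        have h4 : 2 ≤ p.natAbs := by omega
        nlinarith
      · apply mul_left_cancel₀ (pow_ne_zero 3 hp0)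
        linear_combination h

lemma x_eq_zero (x y : ℚ) (h : y ^ 2 + y = x ^ 3 + x ^ 2 + x) : x = 0 := by
  by_contra hx
  have hxd : (x.den : ℚ) ≠ 0 := by exact_mod_cast x.den_ne_zero
  have hyd : (y.den : ℚ) ≠ 0 := by exact_mod_cast y.den_ne_zero
  have ex : (x.num : ℚ) = x * x.den := (Rat.mul_den_eq_num x).symm
  have ey : (y.num : ℚ) = y * y.den := (Rat.mul_den_eq_num y).symm
  -- common denominator `D = x.den * y.den`
  refine descent _ (y.num * x.den - x.num * y.den) (-(y.num * x.den + x.num * y.den + x.den * y.den))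
    (x.den * y.den) (x.num * y.den) rfl ?_ ?_ ?_
  · exact mul_ne_zero (Rat.num_ne_zero.2 hx) (by exact_mod_cast y.den_ne_zero)
  · have : (((y.num * x.den - x.num * y.den) * (-(y.num * x.den + x.num * y.den + x.den * y.den)) *
      (x.den * y.den) : ℤ) : ℚ) = ((-(x.num * y.den) ^ 3 : ℤ) : ℚ) := by
      push_cast
      rw [ex, ey]
      linear_combination (-(x.den : ℚ) ^ 3 * (y.den : ℚ) ^ 3) * h
    exact_mod_cast this
  · ring

/-- The rational solutions of `y² + y = x³ + x² + x` are exactly `(0, 0)` and `(0, −1)`;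
in particular this elliptic curve has only finitely many rational points. -/
theorem rational_points_rank_zero_curve :
    (∀ x y : ℚ, y ^ 2 + y = x ^ 3 + x ^ 2 + x ↔ (x, y) = (0, 0) ∨ (x, y) = (0, -1)) ∧
    {p : ℚ × ℚ | p.2 ^ 2 + p.2 = p.1 ^ 3 + p.1 ^ 2 + p.1}.Finite := by
  have main : ∀ x y : ℚ, y ^ 2 + y = x ^ 3 + x ^ 2 + x ↔ (x, y) = (0, 0) ∨ (x, y) = (0, -1) := by
    intro x y
    constructor
    · intro h
      have hx := x_eq_zero x y h
      subst hx
      have : y * (y + 1) = 0 := by linear_combination h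
      rcases mul_eq_zero.1 this with h1 | h1
      · left; rw [h1]
      · right; rw [eq_neg_of_add_eq_zero_left h1]
    · rintro (h | h) <;> simp only [Prod.mk.injEq] at h <;> obtain ⟨rfl, rfl⟩ := h <;> norm_num
  refine ⟨main, ?_⟩
  apply Set.Finite.subset (Set.toFinite {((0 : ℚ), (0 : ℚ)), (0, -1)})
  rintro ⟨x, y⟩ hp
  exact (main x y).1 hp
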